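/- arXiv:1207.5747 — 2 statements merged into one kernel-verified Lean document; each statement's English description precedes it below -/
import Mathlib

section
/- If N > R, then the function f is strictly increasing on the interval [0, 1]. -/
/-!
For a sequence `a`, the polynomial `∑ₖ a k • Bₙ₊₁,ₖ` in Bernstein form has derivative
`(n + 1) ∑ₖ (a (k + 1) - a k) • Bₙ,ₖ`. On `(0, 1)` every Bernstein polynomial is positive, so a
nondecreasing sequence with distinct endpoints gives a strictly increasing polynomial on `[0, 1]`.
Up to the constant `-β`, the function `f` is of this form with `a k = W (k + 1)`; this sequence
is nondecreasing, and since `R < N` the cost of competing against all `N - 1` others strictly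
exceeds the cost of competing against nobody.
-/

open Finset Polynomial
open scoped fwdDiff

section BernsteinForm

variable {A : Type*} [CommRing A]

/-- The polynomial of degree at most `n` whose coefficients in the Bernstein basis
`bernsteinPolynomial A n k`, `k ≤ n`, are `a 0, …, a n`. At a probability `p` its value is the
expectation of `a` under the binomial distribution with parameters `n` and `p`. The values `a k`
for `k > n` are ignored; taking `a` on all of `ℕ` lets `a` serve for every degree. -/
noncomputable def bernsteinForm (n : ℕ) (a : ℕ → A) : A[X] :=
  ∑ k ∈ range (n + 1), C (a k) * bernsteinPolynomial A n k

theorem eval_bernsteinForm (n : ℕ) (a : ℕ → A) (x : A) :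
    (bernsteinForm n a).eval x =
      ∑ k ∈ range (n + 1), a k * (n.choose k : A) * x ^ k * (1 - x) ^ (n - k) := by
  simp [bernsteinForm, bernsteinPolynomial, eval_finsetSum, mul_assoc]

theorem derivative_bernsteinForm_succ (n : ℕ) (a : ℕ → A) :
    derivative (bernsteinForm (n + 1) a) = (n + 1 : A[X]) * bernsteinForm n (Δ_[1] a) := by
  have shift : ∑ k ∈ range (n + 1), C (a (k + 1)) * bernsteinPolynomial A n (k + 1) +
      C (a 0) * bernsteinPolynomial A n 0 =
      ∑ k ∈ range (n + 1), C (a k) * bernsteinPolynomial A n k := by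
    rw [← sum_range_succ' (fun k ↦ C (a k) * bernsteinPolynomial A n k), sum_range_succ,
      bernsteinPolynomial.eq_zero_of_lt A n.lt_succ_self, mul_zero, add_zero]
  calc derivative (bernsteinForm (n + 1) a)
      = ∑ k ∈ range (n + 1), C (a (k + 1)) *
            ((n + 1) * (bernsteinPolynomial A n k - bernsteinPolynomial A n (k + 1))) +
          C (a 0) * (-(n + 1) * bernsteinPolynomial A n 0) := by
        simp only [bernsteinForm, sum_range_succ' _ (n + 1), derivative_add, derivative_sum,
          derivative_C_mul, bernsteinPolynomial.derivative_succ_aux,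
          bernsteinPolynomial.derivative_zero, Nat.cast_succ, Nat.add_sub_cancel]
    _ = (n + 1) * (∑ k ∈ range (n + 1), C (a (k + 1)) * bernsteinPolynomial A n k -
          (∑ k ∈ range (n + 1), C (a (k + 1)) * bernsteinPolynomial A n (k + 1) +
            C (a 0) * bernsteinPolynomial A n 0)) := by
        simp only [mul_left_comm (C _), mul_sub, sum_sub_distrib, ← mul_sum]
        ring
    _ = (n + 1) * bernsteinForm n (Δ_[1] a) := by
        simp only [shift, bernsteinForm, fwdDiff, C_sub, sub_mul, sum_sub_distrib]

end BernsteinForm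

section Positivity

variable {A : Type*} [CommRing A] [LinearOrder A] [IsStrictOrderedRing A]

theorem eval_bernsteinPolynomial_pos {n k : ℕ} (hk : k ≤ n) {x : A} (hx₀ : 0 < x) (hx₁ : x < 1) :
    0 < (bernsteinPolynomial A n k).eval x := by
  have hchoose : (0 : A) < n.choose k := Nat.cast_pos.2 (Nat.choose_pos hk)
  simp only [bernsteinPolynomial, eval_mul, eval_natCast, eval_pow, eval_X, eval_sub, eval_one]
  exact mul_pos (mul_pos hchoose (pow_pos hx₀ _)) (pow_pos (sub_pos.2 hx₁) _)

theorem eval_bernsteinForm_pos {n : ℕ} {a : ℕ → A} (ha : ∀ k ≤ n, 0 ≤ a k)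
    (hpos : ∃ k ≤ n, 0 < a k) {x : A} (hx₀ : 0 < x) (hx₁ : x < 1) :
    0 < (bernsteinForm n a).eval x := by
  obtain ⟨j, hj, haj⟩ := hpos
  simp only [bernsteinForm, eval_finsetSum, eval_mul, eval_C]
  refine sum_pos' (fun k hk ↦ ?_) ⟨j, mem_range_succ_iff.2 hj, ?_⟩
  · have hk := mem_range_succ_iff.1 hk
    exact mul_nonneg (ha k hk) (eval_bernsteinPolynomial_pos hk hx₀ hx₁).le
  · exact mul_pos haj (eval_bernsteinPolynomial_pos hj hx₀ hx₁)

end Positivity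

theorem exists_fwdDiff_pos_of_lt {G : Type*} [AddCommGroup G] [LinearOrder G]
    [IsOrderedAddMonoid G] {a : ℕ → G} {n : ℕ} (h : a 0 < a n) : ∃ k < n, 0 < Δ_[1] a k := by
  have hsum : ∑ _k ∈ range n, (0 : G) < ∑ k ∈ range n, Δ_[1] a k := by
    simpa only [fwdDiff, sum_range_sub, sum_const_zero, sub_pos] using h
  simpa only [mem_range] using exists_lt_of_sum_lt hsum

theorem strictMonoOn_eval_bernsteinForm {n : ℕ} {a : ℕ → ℝ} (ha : MonotoneOn a (Set.Iic n))
    (hlt : a 0 < a n) : StrictMonoOn (fun x ↦ (bernsteinForm n a).eval x) (Set.Icc 0 1) := by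
  obtain ⟨m, rfl⟩ : ∃ m, n = m + 1 := Nat.exists_eq_succ_of_ne_zero (by rintro rfl; exact hlt.false)
  have hΔ : ∀ k ≤ m, 0 ≤ Δ_[1] a k := fun k hk ↦
    sub_nonneg.2 <| ha (Set.mem_Iic.2 (by lia)) (Set.mem_Iic.2 (by lia)) k.le_succ
  have hΔpos : ∃ k ≤ m, 0 < Δ_[1] a k := by
    simpa only [Nat.lt_succ_iff] using exists_fwdDiff_pos_of_lt hlt
  refine strictMonoOn_of_deriv_pos (convex_Icc 0 1) (Polynomial.continuousOn _) fun x hx ↦ ?_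
  rw [interior_Icc] at hx
  have hform := eval_bernsteinForm_pos hΔ hΔpos hx.1 hx.2
  simp only [Polynomial.deriv, derivative_bernsteinForm_succ, eval_mul, eval_add, eval_natCast,
    eval_one]
  positivity

section CompetingCost

/-- The expected cost `W(k)` of competing when `k` drivers compete for `R` public spots: a driver
obtains a public spot, of cost `1`, with probability `min 1 (R / k)`, and otherwise pays `γ`.
Only `k ≥ 1` is meaningful: division by zero makes `competingCost R γ 0 = γ`. -/
noncomputable def competingCost (R γ : ℝ) (k : ℕ) : ℝ :=
  min 1 (R / k) + (1 - min 1 (R / k)) * γ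

variable {R γ : ℝ}

theorem competingCost_eq_sub (R γ : ℝ) (k : ℕ) :
    competingCost R γ k = γ - (γ - 1) * min 1 (R / k) := by
  rw [competingCost]
  ring

theorem monotoneOn_competingCost (hR : 0 ≤ R) (hγ : 1 ≤ γ) :
    MonotoneOn (competingCost R γ) (Set.Ici 1) := by
  intro i hi j _ hij
  have hi₀ : (0 : ℝ) < i := Nat.cast_pos.2 hi
  have : 0 ≤ γ - 1 := sub_nonneg.2 hγ
  simp only [competingCost_eq_sub]
  gcongr

theorem competingCost_one_lt (hR : 0 < R) (hγ : 1 < γ) {n : ℕ} (hn : 1 < n) (hRn : R < n) :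
    competingCost R γ 1 < competingCost R γ n := by
  have hn' : (1 : ℝ) < n := Nat.one_lt_cast.2 hn
  have hprob : min 1 (R / n) < min 1 (R / (1 : ℕ)) := by
    rw [Nat.cast_one, div_one]
    refine min_lt_of_right_lt (lt_min ?_ (div_lt_self hR hn'))
    rwa [div_lt_one (zero_lt_one.trans hn')]
  simp only [competingCost_eq_sub]
  exact sub_lt_sub_left (mul_lt_mul_of_pos_left hprob (sub_pos.2 hγ)) γ

end CompetingCost

theorem stmt_12_general (N : ℕ) (hN : 1 < N) (R β γ : ℝ) (hR : 0 < R) (hγ : 1 < γ)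
    (W : ℕ → ℝ)
    (hW : ∀ k : ℕ, W k = min 1 (R / (k : ℝ)) + (1 - min 1 (R / (k : ℝ))) * γ)
    (f : ℝ → ℝ)
    (hf : ∀ p : ℝ, f p = -β + ∑ k ∈ Finset.range N,
      W (k + 1) * ((N - 1).choose k : ℝ) * p ^ k * (1 - p) ^ (N - 1 - k))
    (hRN : R < N) :
    StrictMonoOn f (Set.Icc 0 1) := by
  obtain ⟨n, rfl⟩ : ∃ n, N = n + 1 := Nat.exists_eq_succ_of_ne_zero (by lia)
  obtain rfl : W = competingCost R γ := funext hW
  have f_eq : f = fun p ↦ -β + (bernsteinForm n fun k ↦ competingCost R γ (k + 1)).eval p := by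
    funext p
    rw [hf, eval_bernsteinForm, Nat.add_sub_cancel]
  have hmono : Monotone fun k ↦ competingCost R γ (k + 1) := fun i j hij ↦
    monotoneOn_competingCost hR.le hγ.le (Nat.succ_pos i) (Nat.succ_pos j) (Nat.succ_le_succ hij)
  rw [f_eq]
  exact (strictMonoOn_eval_bernsteinForm (hmono.monotoneOn _)
    (competingCost_one_lt hR hγ hN hRN)).const_add (-β)

/-- If N > R, then f is strictly increasing on [0, 1]. -/
theorem stmt_12 (N R : ℕ) (hN : 1 < N) (hR : 1 ≤ R)
    (β γ : ℝ) (hβ : 1 < β) (hβγ : β < γ)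
    (W : ℕ → ℝ)
    (hW : ∀ k : ℕ, W k = min 1 ((R : ℝ) / (k : ℝ)) + (1 - min 1 ((R : ℝ) / (k : ℝ))) * γ)
    (f : ℝ → ℝ)
    (hf : ∀ p : ℝ, f p = -β + ∑ k ∈ Finset.range N,
      W (k + 1) * ((N - 1).choose k : ℝ) * p ^ k * (1 - p) ^ (N - 1 - k))
    (hRN : R < N) :
    StrictMonoOn f (Set.Icc 0 1) :=
  stmt_12_general N hN R β γ (Nat.cast_pos.2 hR) (hβ.trans hβγ) W hW f hf (Nat.cast_lt.2 hRN)
end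

section
/- If N ≤ σ0, then f(p) ≤ 0 for all p ∈ [0, 1] and f(p) < 0 for all p ∈ [0, 1); consequently, competing for public parking is a best response against any symmetric mixed strategy, so the pure action profile with competing probability p = 1 is a symmetric equilibrium of the game. -/
/-!
When `k` drivers compete, each of them pays on average at most the private price `β` exactly when
`k ≤ σ0`, where `σ0 = R (γ - 1) / (γ - β)`. If `N ≤ σ0`, this holds for every possible number of
competitors, so the binomial average of the competition cost is at most `β` as well. A driver who
competes alone pays `1 < β`, and for `p < 1` this event has positive probability, which makes the
inequality strict.
-/

section BinomialMean

open Finset Polynomial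

variable {𝕜 : Type*} [CommRing 𝕜]

/-- The expected value of `a K` when `K` is binomially distributed with parameters `n` and `p`. The
probability of `K = k` is the Bernstein polynomial of index `n, k` evaluated at `p`. -/
noncomputable def binomialMean (n : ℕ) (p : 𝕜) (a : ℕ → 𝕜) : 𝕜 :=
  ∑ k ∈ range (n + 1), a k * (bernsteinPolynomial 𝕜 n k).eval p

theorem eval_bernsteinPolynomial (n k : ℕ) (p : 𝕜) :
    (bernsteinPolynomial 𝕜 n k).eval p = n.choose k * p ^ k * (1 - p) ^ (n - k) := by
  simp [bernsteinPolynomial]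

theorem binomialMean_const (n : ℕ) (p c : 𝕜) : binomialMean n p (fun _ ↦ c) = c := by
  rw [binomialMean, ← mul_sum, ← eval_finsetSum, bernsteinPolynomial.sum, eval_one, mul_one]

variable [LinearOrder 𝕜] [IsStrictOrderedRing 𝕜] {n : ℕ} {p c : 𝕜} {a : ℕ → 𝕜}

theorem eval_bernsteinPolynomial_nonneg (n k : ℕ) (hp : p ∈ Set.Icc 0 1) :
    0 ≤ (bernsteinPolynomial 𝕜 n k).eval p := by
  rw [eval_bernsteinPolynomial]
  have hp₀ := hp.1
  have hp₁ := sub_nonneg.2 hp.2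
  positivity

theorem binomialMean_le (hp : p ∈ Set.Icc 0 1) (ha : ∀ k ≤ n, a k ≤ c) :
    binomialMean n p a ≤ c := by
  rw [← binomialMean_const n p c]
  exact sum_le_sum fun k hk ↦ mul_le_mul_of_nonneg_right (ha k (mem_range_succ_iff.1 hk))
    (eval_bernsteinPolynomial_nonneg n k hp)

theorem binomialMean_lt (hp : p ∈ Set.Ico 0 1) (ha : ∀ k ≤ n, a k ≤ c) (ha₀ : a 0 < c) :
    binomialMean n p a < c := by
  have zero_prob_pos : 0 < (bernsteinPolynomial 𝕜 n 0).eval p := by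
    simpa [eval_bernsteinPolynomial] using pow_pos (sub_pos.2 hp.2) n
  rw [← binomialMean_const n p c]
  refine sum_lt_sum (fun k hk ↦ ?_)
    ⟨0, mem_range.2 n.succ_pos, mul_lt_mul_of_pos_right ha₀ zero_prob_pos⟩
  exact mul_le_mul_of_nonneg_right (ha k (mem_range_succ_iff.1 hk))
    (eval_bernsteinPolynomial_nonneg n k (Set.Ico_subset_Icc_self hp))

end BinomialMean

section CompetitionCost

variable {𝕜 : Type*} [Field 𝕜] [LinearOrder 𝕜] {R β γ k : 𝕜}

/-- The expected cost of competing when `k` drivers compete for `R` public spots: a public spot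
costs `1` and is won with probability `min 1 (R / k)`, and the losers pay `γ`. At
`k = 0` the convention `R / 0 = 0` makes the value `γ`. -/
def competitionCost (R γ k : 𝕜) : 𝕜 :=
  min 1 (R / k) + (1 - min 1 (R / k)) * γ

variable [IsStrictOrderedRing 𝕜]

theorem competitionCost_of_le (hk : 0 < k) (hkR : k ≤ R) : competitionCost R γ k = 1 := by
  simp [competitionCost, min_eq_left ((one_le_div hk).2 hkR)]

theorem competitionCost_le_iff (hβ : 1 ≤ β) (hβγ : β < γ) (hk : 0 < k) :
    competitionCost R γ k ≤ β ↔ k ≤ R * (γ - 1) / (γ - β) := by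
  have hγ : 0 ≤ γ - 1 := sub_nonneg.2 (hβ.trans hβγ.le)
  calc
    competitionCost R γ k ≤ β ↔ γ - β ≤ min 1 (R / k) * (γ - 1) := by
      rw [competitionCost]
      constructor <;> intro h <;> linarith
    _ ↔ γ - β ≤ R / k * (γ - 1) := by
      rw [min_mul_of_nonneg _ _ hγ, one_mul, le_min_iff]
      exact and_iff_right (sub_le_sub_left hβ γ)
    _ ↔ k ≤ R * (γ - 1) / (γ - β) := by
      rw [div_mul_eq_mul_div, le_div_comm₀ (sub_pos.2 hβγ) hk]

end CompetitionCost

/-- If N ≤ σ0, then f(p) ≤ 0 for all p ∈ [0,1] and f(p) < 0 for all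
p ∈ [0,1); i.e. competing is a best response against any symmetric mixed strategy, so
p = 1 is a symmetric equilibrium. -/
theorem stmt_13 (N R : ℕ) (hN : 1 < N) (hR : 1 ≤ R)
    (β γ δ σ0 : ℝ) (hβ : 1 < β) (hβγ : β < γ)
    (hδ : δ = γ - β) (hσ0 : σ0 = R * (γ - 1) / δ)
    (W : ℕ → ℝ)
    (hW : ∀ k : ℕ, W k = min 1 ((R : ℝ) / (k : ℝ)) + (1 - min 1 ((R : ℝ) / (k : ℝ))) * γ)
    (f : ℝ → ℝ)
    (hf : ∀ p : ℝ, f p = -β + ∑ k ∈ Finset.range N,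
      W (k + 1) * ((N - 1).choose k : ℝ) * p ^ k * (1 - p) ^ (N - 1 - k))
    (hle : (N : ℝ) ≤ σ0) :
    (∀ p ∈ Set.Icc (0 : ℝ) 1, f p ≤ 0) ∧ (∀ p ∈ Set.Ico (0 : ℝ) 1, f p < 0) := by
  subst hδ hσ0
  obtain ⟨n, rfl⟩ : ∃ n, N = n + 1 := Nat.exists_eq_add_one.2 (zero_lt_one.trans hN)
  have f_eq (p : ℝ) : f p = binomialMean n p (fun k ↦ W (k + 1)) - β := by
    simp only [hf, binomialMean, eval_bernsteinPolynomial, add_tsub_cancel_right, mul_assoc,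
      neg_add_eq_sub]
  have W_le (k : ℕ) (hk : k ≤ n) : W (k + 1) ≤ β := by
    have hkn : ((k + 1 : ℕ) : ℝ) ≤ (n + 1 : ℕ) := by gcongr
    rw [hW]
    exact (competitionCost_le_iff hβ.le hβγ (by positivity)).2 (hkn.trans hle)
  have W_one : W 1 = 1 :=
    (hW 1).trans (competitionCost_of_le (by simp) (Nat.cast_le.2 hR))
  simp only [f_eq, sub_nonpos, sub_neg]
  exact ⟨fun p hp ↦ binomialMean_le hp W_le,
    fun p hp ↦ binomialMean_lt hp W_le (W_one.trans_lt hβ)⟩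
end
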